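/- arXiv:1605.07473 — 3 statements merged into one kernel-verified Lean document; each statement's English description precedes it below -/
import Mathlib

section
/- For any Gopakumar–Vafa data $(G,n)$ and every integer $d \ge 1$, the sum of the coefficients $b_{d,m}$ over all $m \ge 1$ (a sum with only finitely many nonzero terms) satisfies $\sum_{m \ge 1} b_{d,m} \;=\; -2 \sum_{m \mid d} m \sum_{h=2}^{G(m)} \binom{2h-3}{h-2}\, n_h^{(m)}$. (This is the genus-one consistency of the abc-expansion of Gromov–Witten invariants in terms of Gopakumar–Vafa invariants.) -/
open Finset

/-- The integer coefficients `b_{d,m}` built from Gopakumar–Vafa data `(G, n)`. -/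
def bCoeff (G : ℕ → ℕ) (n : ℕ → ℕ → ℤ) (d m : ℕ) : ℤ :=
  ∑ k ∈ (Nat.gcd d m).divisors,
    (-1) ^ (m / k) * (2 * (d / k) : ℤ) *
      ∑ h ∈ Finset.Icc (m / k + 1) (G (d / k)),
        (Nat.choose (2 * h - 2) (h - 1 + m / k) : ℤ) * n h (d / k)

/-!
Write `b_{d,m}` as a sum over `k ∣ gcd (d, m)` of a quantity depending only on `(d / k, m / k)`.
Summing over `m ≥ 1` first, the multiples `m = k j` of a fixed `k ∣ d` contribute a full sum over
`j ≥ 1`, so only the terms with `k = 1` have to be summed, once for each divisor `d / k` of `d`.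
For these, the sum over `j` of `(-1) ^ j * C(2h - 2, h - 1 + j)` telescopes by Pascal's rule to
`-C(2h - 3, h - 1) = -C(2h - 3, h - 2)`.
-/

lemma sum_range_neg_one_pow_mul_choose_succ {R : Type*} [CommRing R] (N k t : ℕ) :
    ∑ j ∈ range t, (-1 : R) ^ j * ((N + 1).choose (k + 1 + j) : R) =
      (N.choose k : R) - (-1) ^ t * (N.choose (k + t) : R) := by
  induction t with
  | zero => simp
  | succ t ih =>
    have pascal : (N + 1).choose (k + 1 + t) = N.choose (k + t) + N.choose (k + (t + 1)) := by
      rw [add_right_comm, Nat.choose_succ_succ', add_assoc]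
    rw [sum_range_succ, ih, pascal]
    push_cast
    ring

lemma sum_range_neg_one_pow_mul_choose_central {R : Type*} [CommRing R] {h t : ℕ}
    (hh : 2 ≤ h) (ht : h ≤ t + 1) :
    ∑ j ∈ range t, (-1 : R) ^ (j + 1) * ((2 * h - 2).choose (h - 1 + (j + 1)) : R) =
      -((2 * h - 3).choose (h - 2) : R) := by
  obtain ⟨a, rfl⟩ := Nat.exists_eq_add_of_le' hh
  have tail_vanishes : (2 * a + 1).choose (a + 1 + t) = 0 := Nat.choose_eq_zero_of_lt (by lia)
  calc
    _ = -∑ j ∈ range t, (-1 : R) ^ j * ((2 * a + 1 + 1).choose (a + 1 + 1 + j) : R) := by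
      rw [← sum_neg_distrib]
      refine sum_congr rfl fun j _ => ?_
      rw [show 2 * (a + 2) - 2 = 2 * a + 1 + 1 by lia,
        show a + 2 - 1 + (j + 1) = a + 1 + 1 + j by lia, pow_succ]
      ring
    _ = -((2 * a + 1).choose (a + 1) : R) := by
      rw [sum_range_neg_one_pow_mul_choose_succ, tail_vanishes, Nat.cast_zero, mul_zero, sub_zero]
    _ = _ := by
      rw [Nat.choose_symm_half, show 2 * (a + 2) - 3 = 2 * a + 1 by lia, Nat.add_sub_cancel]

lemma hasSum_ite_dvd_succ {α : Type*} [AddCommMonoid α] [TopologicalSpace α] {k : ℕ} (hk : 0 < k)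
    {f : ℕ → α} {a : α} (hf : HasSum (fun j => f (j + 1)) a) :
    HasSum (fun m => if k ∣ m + 1 then f ((m + 1) / k) else 0) a := by
  have succ_index (j : ℕ) : k * j + (k - 1) + 1 = k * (j + 1) := by
    rw [mul_add_one]
    lia
  have index_injective : Function.Injective fun j => k * j + (k - 1) := fun i j hij =>
    Nat.eq_of_mul_eq_mul_left hk (Nat.add_right_cancel hij)
  refine (index_injective.hasSum_iff fun m hm => if_neg ?_).mp ?_
  · rintro ⟨_ | j, hj⟩
    · simp at hj
    · exact hm ⟨j, Nat.succ_injective ((succ_index j).trans hj.symm)⟩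
  · simpa only [Function.comp_def, succ_index, dvd_mul_right, if_true,
      Nat.mul_div_cancel_left _ hk] using hf

/-- The summand `k = 1` of `b_{e,j}`. The summand of `b_{d,m}` for an arbitrary `k ∣ gcd (d, m)`
is its value at `e = d / k` and `j = m / k`. -/
def primitiveCoeff (G : ℕ → ℕ) (n : ℕ → ℕ → ℤ) (e j : ℕ) : ℤ :=
  (-1) ^ j * (2 * e) * ∑ h ∈ Icc (j + 1) (G e), ((2 * h - 2).choose (h - 1 + j) : ℤ) * n h e

section

variable (G : ℕ → ℕ) (n : ℕ → ℕ → ℤ)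

lemma bCoeff_eq_sum_divisors {d : ℕ} (hd : d ≠ 0) (m : ℕ) :
    bCoeff G n d m =
      ∑ k ∈ d.divisors, if k ∣ m then primitiveCoeff G n (d / k) (m / k) else 0 := by
  have divisors_gcd : (d.gcd m).divisors = {k ∈ d.divisors | k ∣ m} := by
    ext k
    simp [Nat.dvd_gcd_iff, hd]
  simp only [bCoeff, primitiveCoeff, divisors_gcd, sum_filter, Int.natCast_div]

lemma primitiveCoeff_eq_zero {e j : ℕ} (hj : G e ≤ j) : primitiveCoeff G n e j = 0 := by
  rw [primitiveCoeff, Icc_eq_empty (by lia), sum_empty, mul_zero]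

lemma primitiveCoeff_succ (e j : ℕ) :
    primitiveCoeff G n e (j + 1) = ∑ h ∈ Icc 2 (G e),
      2 * e * n h e * ((-1) ^ (j + 1) * ((2 * h - 2).choose (h - 1 + (j + 1)) : ℤ)) := by
  rw [primitiveCoeff, mul_sum]
  refine sum_subset_zero_on_sdiff (Icc_subset_Icc_left (by lia)) (fun h hh => ?_)
    fun h _ => by ring
  have choose_vanishes : (2 * h - 2).choose (h - 1 + (j + 1)) = 0 := by
    rw [mem_sdiff, mem_Icc, mem_Icc] at hh
    exact Nat.choose_eq_zero_of_lt (by lia)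
  rw [choose_vanishes, Nat.cast_zero, mul_zero, mul_zero]

lemma sum_range_primitiveCoeff_succ (e : ℕ) :
    ∑ j ∈ range (G e), primitiveCoeff G n e (j + 1) =
      -2 * (e * ∑ h ∈ Icc 2 (G e), ((2 * h - 3).choose (h - 2) : ℤ) * n h e) := by
  simp only [primitiveCoeff_succ]
  rw [sum_comm, mul_sum, mul_sum]
  refine sum_congr rfl fun h hh => ?_
  obtain ⟨two_le, le_G⟩ := mem_Icc.mp hh
  rw [← mul_sum, sum_range_neg_one_pow_mul_choose_central two_le (by lia)]
  ring

lemma hasSum_primitiveCoeff_succ (e : ℕ) :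
    HasSum (fun j => primitiveCoeff G n e (j + 1))
      (-2 * (e * ∑ h ∈ Icc 2 (G e), ((2 * h - 3).choose (h - 2) : ℤ) * n h e)) := by
  rw [← sum_range_primitiveCoeff_succ]
  refine hasSum_sum_of_ne_finset_zero fun j hj => primitiveCoeff_eq_zero G n ?_
  rw [mem_range] at hj
  lia

end

/-- genus-one consistency of the abc-expansion: the (finitely supported) sum
of the `b_{d,m}` over `m ≥ 1` equals `-2 ∑_{m|d} m ∑_{h=2}^{G(m)} C(2h-3, h-2) n_h^{(m)}`. -/
theorem b_sum_genus_one (G : ℕ → ℕ) (n : ℕ → ℕ → ℤ)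
    (hGV : ∀ h m : ℕ, 1 ≤ m → G m < h → n h m = 0)
    (d : ℕ) (hd : 1 ≤ d) :
    {m : ℕ | bCoeff G n d (m + 1) ≠ 0}.Finite ∧
    ∑' m : ℕ, bCoeff G n d (m + 1)
      = -2 * ∑ m ∈ d.divisors, (m : ℤ) *
          ∑ h ∈ Finset.Icc 2 (G m), (Nat.choose (2 * h - 3) (h - 2) : ℤ) * n h m := by
  have hasSum_bCoeff : HasSum (fun m => bCoeff G n d (m + 1))
      (-2 * ∑ e ∈ d.divisors, (e : ℤ) *
        ∑ h ∈ Icc 2 (G e), ((2 * h - 3).choose (h - 2) : ℤ) * n h e) := by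
    simp only [bCoeff_eq_sum_divisors G n (Nat.ne_of_gt hd)]
    rw [mul_sum, ← Nat.sum_div_divisors]
    exact hasSum_sum fun k hk =>
      hasSum_ite_dvd_succ (Nat.pos_of_mem_divisors hk) (hasSum_primitiveCoeff_succ G n (d / k))
  exact ⟨hasSum_bCoeff.summable.hasFiniteSupport_of_discreteTopology, hasSum_bCoeff.tsum_eq⟩
end

section
/- Fix real numbers $t > 0$ and $q$. For integers $g \ge 2$ set $d_g := \tfrac{2(g - q)}{t}$ (so that $g = \tfrac{t}{2} d_g + q$). Then $\lim_{g \to \infty} \; f_g^{CS}\, d_g^{2g-3}\, e^{-t\, d_g} \cdot \frac{(2\pi t)^{2g - 3/2}}{\Gamma\!\left(2g - \tfrac{3}{2}\right)} \cdot \frac{2 \pi^2}{t^{3/2}} \;=\; 1$; that is, along the K\"ahler diagonal the weighted Gromov–Witten invariants of the resolved conifold grow like $\frac{\Gamma(2g - 3/2)}{(2\pi t)^{2g-3/2}} \cdot \frac{t^{3/2}}{2\pi^2}$, with instanton action $A = 2\pi t$. -/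
open Real Filter Topology

/-- `f_g^CS = (-1)^(g-1) B_{2g} / (2g (2g-2)!)` for `g ≥ 1`. -/
noncomputable def fCS (g : ℕ) : ℝ :=
  (-1) ^ (g - 1) * ((bernoulli (2 * g) : ℚ) : ℝ) / (2 * g * Nat.factorial (2 * g - 2))

/-!
Euler's formula gives `(-1)^(g-1) B_{2g} = 2 (2g)! ζ(2g) / (2π)^(2g)`, and `ζ(2g) → 1`, hence
`f_g^CS ~ 4g / (2π)^(2g)`. With `n = 2g - 3` and `c = 3 - 2q` one has `t d_g = n + c`, so the factor
`(t d_g)^n e^(-t d_g)` is asymptotic to `(n/e)^n`: the shift `c` cancels between the power and the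
exponential, which is why the limit does not depend on `q`. Finally `Γ(2g - 3/2) = Γ(n + 3/2)` is
asymptotic to `√(2π) n (n/e)^n` by Stirling's formula and Euler's limit formula for `Γ(1/2)`.
-/

open Asymptotics
open scoped Nat

theorem tendsto_riemannZeta_atTop : Tendsto (fun x : ℝ ↦ riemannZeta x) atTop (𝓝 1) := by
  have abscissa_lt_top : LSeries.abscissaOfAbsConv 1 < ⊤ := by
    rw [LSeries.abscissaOfAbsConv_one]
    exact EReal.coe_lt_top 1
  refine (LSeries.tendsto_atTop abscissa_lt_top).congr' ?_
  filter_upwards [eventually_gt_atTop 1] with x hx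
  exact LSeries_one_eq_riemannZeta (by simpa using hx)

theorem tendsto_tsum_one_div_nat_pow_atTop :
    Tendsto (fun k : ℕ ↦ ∑' n : ℕ, 1 / (n : ℝ) ^ k) atTop (𝓝 1) := by
  rw [← tendsto_ofReal_iff]
  refine (tendsto_riemannZeta_atTop.comp tendsto_natCast_atTop_atTop).congr' ?_
  filter_upwards [eventually_gt_atTop 1] with k hk
  simp [zeta_nat_eq_tsum_of_gt_one hk, Complex.ofReal_tsum]

theorem neg_one_pow_mul_bernoulli_two_mul {k : ℕ} (hk : k ≠ 0) :
    (-1) ^ (k - 1) * (bernoulli (2 * k) : ℝ) =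
      (∑' n : ℕ, 1 / (n : ℝ) ^ (2 * k)) * (2 * (2 * k)! / (2 * π) ^ (2 * k)) := by
  obtain ⟨j, rfl⟩ := Nat.exists_eq_succ_of_ne_zero hk
  rw [(hasSum_zeta_nat hk).tsum_eq, Nat.succ_eq_add_one, Nat.add_sub_cancel,
    show 2 * (j + 1) - 1 = 2 * j + 1 by lia]
  field_simp
  ring

theorem neg_one_pow_mul_bernoulli_two_mul_isEquivalent :
    (fun k : ℕ ↦ (-1) ^ (k - 1) * (bernoulli (2 * k) : ℝ)) ~[atTop]
      fun k ↦ 2 * (2 * k)! / (2 * π) ^ (2 * k) := by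
  have zeta_two_mul_tendsto : Tendsto (fun k : ℕ ↦ ∑' n : ℕ, 1 / (n : ℝ) ^ (2 * k)) atTop (𝓝 1) :=
    tendsto_tsum_one_div_nat_pow_atTop.comp (tendsto_id.const_mul_atTop' two_pos)
  refine isEquivalent_iff_exists_eq_mul.mpr ⟨_, zeta_two_mul_tendsto, ?_⟩
  filter_upwards [eventually_ne_atTop 0] with k hk using neg_one_pow_mul_bernoulli_two_mul hk

theorem const_mul_natCast_add_isEquivalent {b : ℝ} (hb : b ≠ 0) (c : ℝ) :
    (fun n : ℕ ↦ b * n + c) ~[atTop] fun n ↦ b * n := by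
  refine IsEquivalent.refl.add_const_of_norm_tendsto_atTop ?_
  simpa [Function.comp_def] using
    (tendsto_natCast_atTop_atTop (R := ℝ)).const_mul_atTop (abs_pos.mpr hb)

section Gamma

variable {a : ℝ}

theorem Gamma_add_natCast (ha : ∀ m : ℕ, a ≠ -m) (n : ℕ) :
    Gamma (a + n) = Gamma a * ∏ j ∈ Finset.range n, (a + j) := by
  induction n with
  | zero => simp
  | succ n ih =>
    have add_ne_zero : a + n ≠ 0 := fun h ↦ ha n (eq_neg_of_add_eq_zero_left h)
    rw [Finset.prod_range_succ, Nat.cast_succ, ← add_assoc, Gamma_add_one add_ne_zero, ih]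
    ring

theorem Gamma_add_natCast_add_one_isEquivalent (ha : ∀ m : ℕ, a ≠ -m) :
    (fun n : ℕ ↦ Gamma (a + n + 1)) ~[atTop] fun n ↦ (n : ℝ) ^ a * n ! := by
  have Gamma_ne : Gamma a ≠ 0 := Gamma_ne_zero ha
  have ratio_tendsto : Tendsto (fun n ↦ Gamma a / GammaSeq a n) atTop (𝓝 1) := by
    simpa [Gamma_ne, Pi.div_def] using
      (tendsto_const_nhds (x := Gamma a)).div (GammaSeq_tendsto_Gamma a) Gamma_ne
  refine isEquivalent_iff_exists_eq_mul.mpr ⟨_, ratio_tendsto, ?_⟩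
  filter_upwards [eventually_gt_atTop 0] with n hn
  have Gamma_eq := Gamma_add_natCast ha (n + 1)
  rw [Nat.cast_succ, ← add_assoc] at Gamma_eq
  simp only [Pi.mul_apply, GammaSeq, Gamma_eq]
  field_simp

theorem Gamma_add_natCast_add_one_isEquivalent_stirling (ha : ∀ m : ℕ, a ≠ -m) :
    (fun n : ℕ ↦ Gamma (a + n + 1)) ~[atTop]
      fun n ↦ √(2 * π) * (n : ℝ) ^ (a + 1 / 2) * (n / exp 1) ^ n := by
  refine ((Gamma_add_natCast_add_one_isEquivalent ha).trans
    (IsEquivalent.refl.mul Stirling.factorial_isEquivalent_stirling)).congr_right ?_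
  filter_upwards [eventually_gt_atTop 0] with n hn
  rw [Pi.mul_apply, rpow_add (mod_cast hn), ← sqrt_eq_rpow, mul_right_comm 2,
    sqrt_mul (by positivity)]
  ring

theorem natCast_add_pow_mul_exp_neg_isEquivalent (c : ℝ) :
    (fun n : ℕ ↦ (n + c) ^ n * exp (-(n + c))) ~[atTop] fun n ↦ (n / exp 1) ^ n := by
  have ratio_tendsto : Tendsto (fun n : ℕ ↦ (1 + c / n) ^ n * exp (-c)) atTop (𝓝 1) := by
    simpa [← exp_add] using (tendsto_one_add_div_pow_exp c).mul_const (exp (-c))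
  refine isEquivalent_iff_exists_eq_mul.mpr ⟨_, ratio_tendsto, ?_⟩
  filter_upwards [eventually_ne_atTop 0] with n hn
  have add_eq : (n : ℝ) + c = (1 + c / n) * n := by field_simp
  have exp_eq : exp (-(n + c)) = exp (-c) / exp 1 ^ n := by
    rw [neg_add, exp_add, exp_neg (n : ℝ), ← exp_one_pow]
    ring
  rw [exp_eq, add_eq, mul_pow, Pi.mul_apply, div_pow]
  ring

theorem natCast_add_pow_mul_exp_neg_div_Gamma_isEquivalent (ha : ∀ m : ℕ, a ≠ -m) (c : ℝ) :
    (fun n : ℕ ↦ (n + c) ^ n * exp (-(n + c)) / Gamma (a + n + 1)) ~[atTop]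
      fun n ↦ 1 / (√(2 * π) * (n : ℝ) ^ (a + 1 / 2)) := by
  refine ((natCast_add_pow_mul_exp_neg_isEquivalent c).div
    (Gamma_add_natCast_add_one_isEquivalent_stirling ha)).congr_right ?_
  filter_upwards [eventually_gt_atTop 0] with n hn
  simp only [Pi.div_apply]
  field_simp

end Gamma

theorem fCS_isEquivalent : fCS ~[atTop] fun g ↦ 4 * g / (2 * π) ^ (2 * g) := by
  have fCS_isEquivalent_sub_one :
      fCS ~[atTop] fun g ↦ (2 * g + -1) * (2 / (2 * π) ^ (2 * g)) := by
    refine (neg_one_pow_mul_bernoulli_two_mul_isEquivalent.div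
      (IsEquivalent.refl (u := fun g : ℕ ↦ (2 * g * (2 * g - 2)! : ℝ)))).congr_right ?_
    filter_upwards [eventually_ne_atTop 0] with g hg
    obtain ⟨j, rfl⟩ := Nat.exists_eq_succ_of_ne_zero hg
    have factorial_eq : ((2 * (j + 1))! : ℝ) = (2 * j + 2) * (2 * j + 1) * (2 * j)! := by
      rw [mul_add_one, Nat.factorial_succ, Nat.factorial_succ]
      push_cast
      ring
    simp only [Nat.succ_eq_add_one, Pi.div_apply, factorial_eq]
    rw [show 2 * (j + 1) - 2 = 2 * j by lia]
    push_cast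
    field_simp
    ring
  refine (fCS_isEquivalent_sub_one.trans
    ((const_mul_natCast_add_isEquivalent two_ne_zero (-1)).mul .refl)).congr_right ?_
  exact .of_forall fun g ↦ by simp only [Pi.mul_apply]; ring

theorem two_mul_sub_pow_mul_exp_neg_div_Gamma_isEquivalent (q : ℝ) :
    (fun g : ℕ ↦ (2 * (g - q)) ^ (2 * g - 3) * exp (-(2 * (g - q))) / Gamma (2 * g - 3 / 2))
      ~[atTop] fun g ↦ 1 / (√(2 * π) * (2 * g)) := by
  have half_ne_neg (m : ℕ) : (1 / 2 : ℝ) ≠ -m :=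
    ((neg_nonpos.mpr m.cast_nonneg).trans_lt one_half_pos).ne'
  have two_mul_sub_tendsto : Tendsto (fun g : ℕ ↦ 2 * g - 3) atTop atTop :=
    (tendsto_sub_atTop_nat 3).comp (tendsto_id.const_mul_atTop' two_pos)
  have cast_eq : ∀ᶠ g : ℕ in atTop, ((2 * g - 3 : ℕ) : ℝ) = 2 * g + -3 := by
    filter_upwards [eventually_ge_atTop 2] with g hg
    rw [Nat.cast_sub (by lia)]
    push_cast
    ring
  have along_diagonal := (natCast_add_pow_mul_exp_neg_div_Gamma_isEquivalent half_ne_neg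
    (3 - 2 * q)).comp_tendsto two_mul_sub_tendsto
  have denominator : (fun g : ℕ ↦ 1 / (√(2 * π) * (2 * g + -3))) ~[atTop]
      fun g ↦ 1 / (√(2 * π) * (2 * g)) :=
    IsEquivalent.refl.div
      (IsEquivalent.refl.mul (const_mul_natCast_add_isEquivalent two_ne_zero (-3)))
  refine (along_diagonal.congr_left ?_).trans (denominator.congr_left ?_)
  · filter_upwards [cast_eq] with g hg
    simp only [Function.comp_apply, hg]
    ring_nf
  · filter_upwards [cast_eq] with g hg
    simp only [Function.comp_apply, hg, add_halves, rpow_one]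

theorem fCS_mul_two_mul_sub_pow_mul_exp_neg_div_Gamma_isEquivalent (q : ℝ) :
    (fun g : ℕ ↦ fCS g *
        ((2 * (g - q)) ^ (2 * g - 3) * exp (-(2 * (g - q))) / Gamma (2 * g - 3 / 2)))
      ~[atTop] fun g ↦ 2 / ((2 * π) ^ (2 * g) * √(2 * π)) := by
  refine (fCS_isEquivalent.mul
    (two_mul_sub_pow_mul_exp_neg_div_Gamma_isEquivalent q)).congr_right ?_
  filter_upwards [eventually_ne_atTop 0] with g hg
  simp only [Pi.mul_apply]
  field_simp
  ring

theorem two_pi_mul_rpow_mul_eq {t : ℝ} (ht : 0 < t) {g : ℕ} (hg : 2 ≤ g) :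
    (2 * π * t) ^ (2 * (g : ℝ) - 3 / 2) * (2 * π ^ 2 / t ^ (3 / 2 : ℝ)) =
      t ^ (2 * g - 3) * ((2 * π) ^ (2 * g) * √(2 * π) / 2) := by
  have t_rpow : t ^ (2 * (g : ℝ) - 3 / 2) = t ^ (2 * g - 3) * t ^ (3 / 2 : ℝ) := by
    rw [← rpow_natCast, ← rpow_add ht, Nat.cast_sub (by lia)]
    push_cast
    ring_nf
  have two_pi_rpow :
      (2 * π) ^ (2 * (g : ℝ) - 3 / 2) * (2 * π) ^ 2 = (2 * π) ^ (2 * g) * √(2 * π) := by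
    rw [sqrt_eq_rpow, ← rpow_natCast, ← rpow_natCast, ← rpow_add two_pi_pos,
      ← rpow_add two_pi_pos]
    push_cast
    ring_nf
  rw [mul_rpow two_pi_pos.le ht.le, t_rpow, ← two_pi_rpow]
  field_simp

/-- along the Kähler diagonal `d_g = 2(g-q)/t`, the weighted Gromov–Witten
invariants `f_g^CS d_g^(2g-3) e^(-t d_g)` of the resolved conifold grow like
`Γ(2g - 3/2)/(2πt)^(2g-3/2) · t^(3/2)/(2π²)`. -/
theorem conifold_kahler_diagonal (t q : ℝ) (ht : 0 < t) :
    Tendsto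
      (fun g : ℕ =>
        fCS g * (2 * ((g : ℝ) - q) / t) ^ (2 * g - 3) *
            Real.exp (-t * (2 * ((g : ℝ) - q) / t)) *
          ((2 * Real.pi * t) ^ (2 * (g : ℝ) - 3 / 2) / Real.Gamma (2 * (g : ℝ) - 3 / 2)) *
          (2 * Real.pi ^ 2 / t ^ ((3 : ℝ) / 2)))
      atTop (𝓝 1) := by
  have ratio_tendsto_one := (isEquivalent_iff_tendsto_one (.of_forall fun g ↦ by positivity)).mp
    (fCS_mul_two_mul_sub_pow_mul_exp_neg_div_Gamma_isEquivalent q)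
  refine ratio_tendsto_one.congr' ?_
  filter_upwards [eventually_ge_atTop 2] with g hg
  have exponent_eq : -t * (2 * (g - q) / t) = -(2 * (g - q)) := by field_simp
  rw [exponent_eq, Pi.div_apply, mul_assoc _ (_ / _), div_mul_eq_mul_div,
    two_pi_mul_rpow_mul_eq ht hg, div_pow]
  field_simp
end

section
/- For every fixed real number $q$, $\lim_{x \to +\infty} \dfrac{\sqrt{2\pi}\, e^{2q - x}\, (x-1)\, (x - 2q)^{x-3} \;-\; \Gamma\!\left(x - \tfrac{3}{2}\right)}{\Gamma\!\left(x - \tfrac{5}{2}\right)} \;=\; \frac{1}{2}\left(-\frac{71}{12} + 12 q - 4 q^2\right)$. (This identifies the polynomial $\mathcal{P}_1(q) = -\tfrac{71}{12} + 12q - 4q^2$ in the diagonal asymptotic expansion.) -/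
open Real Filter Topology

/-!
If `x * log (N x / Γ (x + a)) → c`, then `N x / Γ (x + a) = 1 + c / x + o (1 / x)`, and multiplying
by `Γ (x + a) / Γ (x + a - 1) = x + a - 1` shows that `(N x - Γ (x + a)) / Γ (x + a - 1) → c`. So it
suffices to expand both logarithms up to `o (1 / x)`.

For the Gamma function this is Stirling's series with one correction term. The remainder `μ` in
Stirling's formula satisfies `μ y - μ (y + 1) = (y + 1 / 2) * log (1 + 1 / y) - 1`. The power series
of the right-hand side in `1 / (2 * y + 1)` places it between the differences `f y - f (y + 1)` for
`f y = 1 / (12 * y + 6)` and for `f y = 1 / (12 * y)`. Since `μ (y + n) → 0`, summing over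
`y, y + 1, y + 2, …` gives `1 / (12 * y + 6) ≤ μ y ≤ 1 / (12 * y)`.
-/

section Limits

theorem le_of_forall_sub_succ_le_sub_succ {G : Type*} [AddCommGroup G] [PartialOrder G]
    [IsOrderedAddMonoid G] [TopologicalSpace G] [IsTopologicalAddGroup G] [OrderClosedTopology G]
    {a b : ℕ → G} {l : G} (h : ∀ n, a n - a (n + 1) ≤ b n - b (n + 1))
    (ha : Tendsto a atTop (𝓝 l)) (hb : Tendsto b atTop (𝓝 l)) : a ≤ b := by
  have hanti : Antitone (b - a) := antitone_nat_of_succ_le fun n => by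
    have := sub_le_sub_iff.mp (h n)
    exact sub_le_sub_iff.mpr (by rwa [add_comm])
  have hlim : Tendsto (b - a) atTop (𝓝 0) := by simpa only [sub_self] using! hb.sub ha
  exact fun n => sub_nonneg.mp (hanti.le_of_tendsto hlim n)

theorem tendsto_mul_exp_sub_one {ι : Type*} {l : Filter ι} {f u : ι → ℝ} {c : ℝ}
    (hu : Tendsto u l (𝓝 0)) (hfu : Tendsto (fun i => f i * u i) l (𝓝 c)) :
    Tendsto (fun i => f i * (exp (u i) - 1)) l (𝓝 c) := by
  have hslope : Tendsto (fun i => dslope exp 0 (u i)) l (𝓝 1) := by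
    have hcont : ContinuousAt (dslope exp 0) 0 := continuousAt_dslope_same.mpr differentiableAt_exp
    simpa using! hcont.tendsto.comp hu
  have hexp (t : ℝ) : t * dslope exp 0 t = exp t - 1 := by simpa using sub_smul_dslope exp 0 t
  simpa only [mul_assoc, hexp, mul_one] using hfu.mul hslope

theorem tendsto_zero_of_tendsto_mul {u : ℝ → ℝ} {c : ℝ}
    (h : Tendsto (fun x => x * u x) atTop (𝓝 c)) : Tendsto u atTop (𝓝 0) :=
  tendsto_zero_of_isBoundedUnder_smul_of_tendsto_cobounded h.norm.isBoundedUnder_le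
    (tendsto_id'.mpr (by simp))

theorem tendsto_mul_one_div_mul_add {c : ℝ} (hc : c ≠ 0) (b : ℝ) :
    Tendsto (fun x : ℝ => x * (1 / (c * x + b))) atTop (𝓝 (1 / c)) := by
  have h : Tendsto (fun x : ℝ => 1 / (c + b / x)) atTop (𝓝 (1 / (c + 0))) :=
    tendsto_const_nhds.div (tendsto_const_nhds.add (tendsto_const_nhds.div_atTop tendsto_id))
      (by simpa)
  rw [add_zero] at h
  refine h.congr' ?_
  filter_upwards [eventually_ne_atTop 0] with x hx
  rw [add_div' _ _ _ hx, one_div_div, mul_one_div]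

end Limits

section Log

theorem log_add_eq_log_add_log_one_add_div {a x : ℝ} (hx : 0 < x) (hxa : 0 < x + a) :
    log (x + a) = log x + log (1 + a / x) := by
  rw [one_add_div hx.ne', log_div hxa.ne' hx.ne', add_sub_cancel]

theorem abs_mul_mul_log_one_add_div_sub_add_le {a x : ℝ} (hx : |a| < x) :
    |x * (x * log (1 + a / x) - a) + a ^ 2 / 2| ≤ |a| ^ 3 / (x - |a|) := by
  have hx0 : 0 < x := (abs_nonneg a).trans_lt hx
  have hxa : 0 < x - |a| := sub_pos.mpr hx
  have habs : |-a / x| = |a| / x := by rw [abs_div, abs_neg, abs_of_pos hx0]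
  have htaylor := abs_log_sub_add_sum_range_le (x := -a / x) (by rwa [habs, div_lt_one hx0]) 2
  have hsum : ∑ i ∈ Finset.range 2, (-a / x) ^ (i + 1) / ((i : ℝ) + 1) =
      -(a / x) + (a / x) ^ 2 / 2 := by
    norm_num [Finset.sum_range_succ, neg_div]
  calc |x * (x * log (1 + a / x) - a) + a ^ 2 / 2|
      = x ^ 2 * |(∑ i ∈ Finset.range 2, (-a / x) ^ (i + 1) / (i + 1)) + log (1 - -a / x)| := by
        rw [hsum, neg_div, sub_neg_eq_add, ← abs_of_pos (pow_pos hx0 2), ← abs_mul]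
        congr 1
        field_simp
        ring
    _ ≤ x ^ 2 * (|-a / x| ^ (2 + 1) / (1 - |-a / x|)) := by gcongr
    _ = |a| ^ 3 / (x - |a|) := by
        rw [habs, one_sub_div hx0.ne', div_pow]
        field_simp

theorem tendsto_mul_mul_log_one_add_div_sub (a : ℝ) :
    Tendsto (fun x : ℝ => x * (x * log (1 + a / x) - a)) atTop (𝓝 (-(a ^ 2 / 2))) := by
  have hbound : Tendsto (fun x : ℝ => |a| ^ 3 / (x - |a|)) atTop (𝓝 0) :=
    tendsto_const_nhds.div_atTop (tendsto_atTop_add_const_right _ (-|a|) tendsto_id)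
  rw [tendsto_iff_norm_sub_tendsto_zero]
  refine squeeze_zero' (.of_forall fun _ => norm_nonneg _) ?_ hbound
  filter_upwards [eventually_gt_atTop |a|] with x hx
  rw [norm_eq_abs, sub_neg_eq_add]
  exact abs_mul_mul_log_one_add_div_sub_add_le hx

theorem tendsto_mul_add_mul_log_one_add_div_sub (a b : ℝ) :
    Tendsto (fun x : ℝ => x * ((x + b) * log (1 + a / x) - a)) atTop (𝓝 (a * b - a ^ 2 / 2)) := by
  have h := (tendsto_mul_mul_log_one_add_div_sub a).add
    ((tendsto_mul_log_one_add_div_atTop a).const_mul b)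
  convert h using 2 <;> ring

variable {y : ℝ}

theorem hasSum_add_half_mul_log_one_add_inv (hy : 0 < y) :
    HasSum (fun k : ℕ => 1 / (2 * (k : ℝ) + 1) * ((1 / (2 * y + 1)) ^ 2) ^ k)
      ((y + 1 / 2) * log (1 + y⁻¹)) := by
  have h := (hasSum_log_one_add_inv hy).mul_left (y + 1 / 2)
  refine h.congr_fun fun k => ?_
  rw [← pow_mul, pow_succ]
  field_simp

theorem sub_le_add_half_mul_log_one_add_inv_sub_one (hy : 0 < y) :
    1 / (12 * y + 6) - 1 / (12 * (y + 1) + 6) ≤ (y + 1 / 2) * log (1 + y⁻¹) - 1 := by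
  have hpartial : 1 + 1 / 3 * (1 / (2 * y + 1)) ^ 2 ≤ (y + 1 / 2) * log (1 + y⁻¹) := by
    have h := sum_le_hasSum (Finset.range 2) (fun i _ => by positivity)
      (hasSum_add_half_mul_log_one_add_inv hy)
    simpa [Finset.sum_range_succ, show (2 + 1 : ℝ) = 3 by norm_num] using h
  have hgap : 1 / 3 * (1 / (2 * y + 1)) ^ 2 - (1 / (12 * y + 6) - 1 / (12 * (y + 1) + 6)) =
      2 / (3 * (2 * y + 1) ^ 2 * (2 * y + 3)) := by
    rw [show 12 * y + 6 = 6 * (2 * y + 1) by ring, show 12 * (y + 1) + 6 = 6 * (2 * y + 3) by ring]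
    field_simp
    ring
  have hgap_nonneg : 0 ≤ 2 / (3 * (2 * y + 1) ^ 2 * (2 * y + 3)) := by positivity
  linarith

theorem add_half_mul_log_one_add_inv_sub_one_le (hy : 0 < y) :
    (y + 1 / 2) * log (1 + y⁻¹) - 1 ≤ 1 / (12 * y) - 1 / (12 * (y + 1)) := by
  set s := (1 / (2 * y + 1)) ^ 2 with hs
  have hs_lt : s < 1 := by
    rw [hs, sq_lt_one_iff₀ (by positivity), div_lt_one (by positivity)]
    linarith
  have htail : HasSum (fun k : ℕ => 1 / (2 * ((k + 1 : ℕ) : ℝ) + 1) * s ^ (k + 1))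
      ((y + 1 / 2) * log (1 + y⁻¹) - 1) := by
    simpa only [Finset.sum_range_one, Nat.cast_zero, mul_zero, zero_add, div_one, pow_zero, mul_one]
      using (hasSum_nat_add_iff' 1).mpr (hasSum_add_half_mul_log_one_add_inv hy)
  have hgeom : HasSum (fun k : ℕ => 1 / 3 * s * s ^ k) (1 / 3 * s * (1 - s)⁻¹) :=
    (hasSum_geometric_of_lt_one (by positivity) hs_lt).mul_left _
  have hterm (k : ℕ) : 1 / (2 * ((k + 1 : ℕ) : ℝ) + 1) * s ^ (k + 1) ≤ 1 / 3 * s * s ^ k := by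
    rw [pow_succ', ← mul_assoc]
    gcongr
    push_cast
    linarith [k.cast_nonneg (α := ℝ)]
  calc (y + 1 / 2) * log (1 + y⁻¹) - 1
      ≤ 1 / 3 * s * (1 - s)⁻¹ := hasSum_le hterm htail hgeom
    _ = 1 / (12 * y) - 1 / (12 * (y + 1)) := by
        have hone_sub : 1 - s = 4 * y * (y + 1) / (2 * y + 1) ^ 2 := by
          rw [hs]
          field_simp
          ring
        rw [hone_sub, hs]
        field_simp
        ring

end Log

section Stirling

/-- The remainder of Stirling's approximation
`log Γ y ≈ (y - 1 / 2) * log y - y + log (2 * π) / 2`; meaningful for `0 < y`. -/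
noncomputable def stirlingRemainder (y : ℝ) : ℝ :=
  log (Gamma y) - ((y - 1 / 2) * log y - y + log (2 * π) / 2)

variable {y : ℝ}

theorem log_Gamma_add_one (hy : 0 < y) : log (Gamma (y + 1)) = log (Gamma y) + log y := by
  rw [Gamma_add_one hy.ne', log_mul hy.ne' (Gamma_pos_of_pos hy).ne', add_comm]

theorem stirlingRemainder_sub_stirlingRemainder_add_one (hy : 0 < y) :
    stirlingRemainder y - stirlingRemainder (y + 1) = (y + 1 / 2) * log (1 + y⁻¹) - 1 := by
  rw [stirlingRemainder, stirlingRemainder, log_Gamma_add_one hy,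
    log_add_eq_log_add_log_one_add_div hy (by positivity), one_div y]
  ring

theorem stirlingRemainder_add_natCast_add_one (hy : 0 < y) {n : ℕ} (hn : n ≠ 0) :
    stirlingRemainder (y + (n + 1 : ℕ)) =
      log (Stirling.stirlingSeq n) - BohrMollerup.logGammaSeq y n -
          (n * log (1 + (y + 1) / n) + (y + 1 / 2) * (log (n + (y + 1)) - log n)) +
        (log (Gamma y) + y + 1 - log √π) := by
  have hn' : (0 : ℝ) < n := by positivity
  have hGamma := BohrMollerup.f_add_nat_eq (f := fun t => log (Gamma t)) log_Gamma_add_one hy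
    (n + 1)
  have hshift : y + (n + 1 : ℕ) = n + (y + 1) := by push_cast; ring
  rw [stirlingRemainder, hGamma, hshift, Stirling.log_stirlingSeq_formula,
    BohrMollerup.logGammaSeq, log_add_eq_log_add_log_one_add_div hn' (by positivity),
    log_div hn'.ne' (exp_ne_zero 1), log_exp, log_mul two_ne_zero hn'.ne',
    log_mul two_ne_zero pi_ne_zero, log_sqrt pi_nonneg]
  ring

theorem tendsto_stirlingRemainder_add_natCast (hy : 0 < y) :
    Tendsto (fun n : ℕ => stirlingRemainder (y + n)) atTop (𝓝 0) := by
  have hStirling : Tendsto (fun n => log (Stirling.stirlingSeq n)) atTop (𝓝 (log √π)) :=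
    Stirling.tendsto_stirlingSeq_sqrt_pi.log (by positivity)
  have hGamma := BohrMollerup.tendsto_log_gamma hy
  have hmul_log := (tendsto_mul_log_one_add_div_atTop (y + 1)).comp
    (tendsto_natCast_atTop_atTop (R := ℝ))
  have hlog := ((tendsto_log_comp_add_sub_log (y + 1)).comp
    (tendsto_natCast_atTop_atTop (R := ℝ))).const_mul (y + 1 / 2)
  have h := ((hStirling.sub hGamma).sub (hmul_log.add hlog)).add_const
    (log (Gamma y) + y + 1 - log √π)
  rw [← tendsto_add_atTop_iff_nat 1]
  convert h.congr' ?_ using 2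
  · ring
  · filter_upwards [eventually_ne_atTop 0] with n hn
    exact (stirlingRemainder_add_natCast_add_one hy hn).symm

theorem tendsto_one_div_mul_add_natCast_add {c : ℝ} (hc : 0 < c) (y d : ℝ) :
    Tendsto (fun n : ℕ => 1 / (c * (y + n) + d)) atTop (𝓝 0) :=
  tendsto_const_nhds.div_atTop <| tendsto_atTop_add_const_right _ _ <|
    (tendsto_atTop_add_const_left _ _ tendsto_natCast_atTop_atTop).const_mul_atTop hc

theorem one_div_le_stirlingRemainder (hy : 0 < y) : 1 / (12 * y + 6) ≤ stirlingRemainder y := by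
  have h := le_of_forall_sub_succ_le_sub_succ (a := fun n : ℕ => 1 / (12 * (y + n) + 6))
    (b := fun n : ℕ => stirlingRemainder (y + n)) (fun n => ?_)
    (tendsto_one_div_mul_add_natCast_add (by norm_num) y 6)
    (tendsto_stirlingRemainder_add_natCast hy) 0
  · simpa using h
  · have hyn : 0 < y + n := by positivity
    rw [Nat.cast_add_one, ← add_assoc, stirlingRemainder_sub_stirlingRemainder_add_one hyn]
    exact sub_le_add_half_mul_log_one_add_inv_sub_one hyn

theorem stirlingRemainder_le_one_div (hy : 0 < y) : stirlingRemainder y ≤ 1 / (12 * y) := by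
  have h := le_of_forall_sub_succ_le_sub_succ (a := fun n : ℕ => stirlingRemainder (y + n))
    (b := fun n : ℕ => 1 / (12 * (y + n))) (fun n => ?_)
    (tendsto_stirlingRemainder_add_natCast hy)
    (by simpa using tendsto_one_div_mul_add_natCast_add (c := 12) (by norm_num) y 0) 0
  · simpa using h
  · have hyn : 0 < y + n := by positivity
    rw [Nat.cast_add_one, ← add_assoc, stirlingRemainder_sub_stirlingRemainder_add_one hyn]
    exact add_half_mul_log_one_add_inv_sub_one_le hyn

theorem tendsto_mul_stirlingRemainder_add (a : ℝ) :
    Tendsto (fun x : ℝ => x * stirlingRemainder (x + a)) atTop (𝓝 (1 / 12)) := by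
  have hratio (d : ℝ) : Tendsto (fun x : ℝ => x * (1 / (12 * (x + a) + d))) atTop (𝓝 (1 / 12)) := by
    simpa only [mul_add, add_assoc] using
      tendsto_mul_one_div_mul_add (c := 12) (by norm_num) (12 * a + d)
  refine tendsto_of_tendsto_of_tendsto_of_le_of_le' (hratio 6) (hratio 0) ?_ ?_ <;>
    filter_upwards [eventually_gt_atTop 0, eventually_gt_atTop (-a)] with x hx hxa
  · gcongr
    exact one_div_le_stirlingRemainder (by linarith)
  · gcongr
    rw [add_zero]
    exact stirlingRemainder_le_one_div (by linarith)

/-- The limit is `B₂(a) / 2` with `B₂` the second Bernoulli polynomial. -/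
theorem tendsto_mul_log_Gamma_add_sub (a : ℝ) :
    Tendsto
      (fun x : ℝ => x * (log (Gamma (x + a)) - ((x + a - 1 / 2) * log x - x + log (2 * π) / 2)))
      atTop (𝓝 ((a ^ 2 - a + 1 / 6) / 2)) := by
  have h := (tendsto_mul_add_mul_log_one_add_div_sub a (a - 1 / 2)).add
    (tendsto_mul_stirlingRemainder_add a)
  convert h.congr' ?_ using 2
  · ring
  · filter_upwards [eventually_gt_atTop 0, eventually_gt_atTop (-a)] with x hx hxa
    rw [stirlingRemainder, log_add_eq_log_add_log_one_add_div hx (by linarith)]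
    ring

theorem tendsto_sub_Gamma_div_Gamma {N : ℝ → ℝ} {a c : ℝ} (hN : ∀ᶠ x in atTop, 0 < N x)
    (h : Tendsto (fun x => x * (log (N x) - log (Gamma (x + a)))) atTop (𝓝 c)) :
    Tendsto (fun x => (N x - Gamma (x + a)) / Gamma (x + a - 1)) atTop (𝓝 c) := by
  have hlog := tendsto_zero_of_tendsto_mul h
  have hmul : Tendsto (fun x => (x + (a - 1)) * (log (N x) - log (Gamma (x + a)))) atTop (𝓝 c) := by
    simpa [add_mul] using h.add (hlog.const_mul (a - 1))
  refine (tendsto_mul_exp_sub_one hlog hmul).congr' ?_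
  filter_upwards [hN, eventually_gt_atTop (1 - a)] with x hNx hx
  have hpos : 0 < x + a - 1 := by linarith
  have hGamma : 0 < Gamma (x + a - 1) := Gamma_pos_of_pos hpos
  have hrec : Gamma (x + a) = (x + a - 1) * Gamma (x + a - 1) := by
    rw [← Gamma_add_one hpos.ne', sub_add_cancel]
  rw [exp_sub, exp_log hNx, exp_log (Gamma_pos_of_pos (by linarith)), hrec, ← add_sub_assoc,
    mul_sub_one, ← mul_div_assoc, mul_div_mul_left _ _ hpos.ne', sub_div,
    mul_div_cancel_right₀ _ hGamma.ne']

end Stirling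

section DiagonalTerm

/-- The term whose expansion along `Γ (x - 3 / 2), Γ (x - 5 / 2), …` defines the polynomials
`𝒫ₖ(q)`. The real power has its usual meaning only for `2 * q < x`. -/
noncomputable def diagonalTerm (q x : ℝ) : ℝ :=
  √(2 * π) * exp (2 * q - x) * (x - 1) * (x - 2 * q) ^ (x - 3)

variable {q x : ℝ}

theorem diagonalTerm_pos (hx : 1 < x) (hxq : 2 * q < x) : 0 < diagonalTerm q x := by
  unfold diagonalTerm
  have hx1 : 0 < x - 1 := sub_pos.mpr hx
  have hpow : 0 < (x - 2 * q) ^ (x - 3) := rpow_pos_of_pos (sub_pos.mpr hxq) _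
  exact mul_pos (mul_pos (by positivity) hx1) hpow

theorem log_diagonalTerm (hx : 1 < x) (hxq : 2 * q < x) :
    log (diagonalTerm q x) =
      log (2 * π) / 2 + (2 * q - x) + log (x - 1) + (x - 3) * log (x - 2 * q) := by
  have hx1 : 0 < x - 1 := sub_pos.mpr hx
  have hxq' : 0 < x - 2 * q := sub_pos.mpr hxq
  rw [diagonalTerm, log_mul (by positivity) (by positivity), log_mul (by positivity) hx1.ne',
    log_mul (by positivity) (exp_ne_zero _), log_sqrt (by positivity), log_exp, log_rpow hxq']

theorem tendsto_mul_log_diagonalTerm_sub (q : ℝ) :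
    Tendsto (fun x => x * (log (diagonalTerm q x) - ((x - 2) * log x - x + log (2 * π) / 2)))
      atTop (𝓝 (-1 + 6 * q - 2 * q ^ 2)) := by
  have h := (tendsto_mul_log_one_add_div_atTop (-1)).add
    (tendsto_mul_add_mul_log_one_add_div_sub (-(2 * q)) (-3))
  convert h.congr' ?_ using 2
  · ring
  · filter_upwards [eventually_gt_atTop 1, eventually_gt_atTop (2 * q)] with x hx hxq
    have hx0 : 0 < x := by linarith
    rw [log_diagonalTerm hx hxq, sub_eq_add_neg x 1, sub_eq_add_neg x (2 * q),
      log_add_eq_log_add_log_one_add_div hx0 (by linarith),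
      log_add_eq_log_add_log_one_add_div hx0 (by linarith)]
    ring

theorem tendsto_mul_log_diagonalTerm_sub_log_Gamma (q : ℝ) :
    Tendsto (fun x => x * (log (diagonalTerm q x) - log (Gamma (x + -(3 / 2))))) atTop
      (𝓝 (1 / 2 * (-(71 / 12) + 12 * q - 4 * q ^ 2))) := by
  convert (tendsto_mul_log_diagonalTerm_sub q).sub (tendsto_mul_log_Gamma_add_sub (-(3 / 2)))
    using 2 <;> ring

end DiagonalTerm

/-- the subleading diagonal asymptotics identify the polynomial
`𝒫_1(q) = -71/12 + 12q - 4q²`. -/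
theorem diagonal_subleading_P1 (q : ℝ) :
    Tendsto
      (fun x : ℝ =>
        (Real.sqrt (2 * Real.pi) * Real.exp (2 * q - x) * (x - 1) * (x - 2 * q) ^ (x - 3) -
            Real.Gamma (x - 3 / 2)) /
          Real.Gamma (x - 5 / 2))
      atTop (𝓝 (1 / 2 * (-(71 / 12) + 12 * q - 4 * q ^ 2))) := by
  have hpos : ∀ᶠ x in atTop, 0 < diagonalTerm q x := by
    filter_upwards [eventually_gt_atTop 1, eventually_gt_atTop (2 * q)] with x hx hxq
    exact diagonalTerm_pos hx hxq
  refine (tendsto_sub_Gamma_div_Gamma hpos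
    (tendsto_mul_log_diagonalTerm_sub_log_Gamma q)).congr fun x => ?_
  rw [← sub_eq_add_neg, show x - 3 / 2 - 1 = x - 5 / 2 by ring, diagonalTerm]
end
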